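/- Let x₀ = (a,a) with 0 < a < 1 be a point on the diagonal of Ω₁. If φ is a C² function on a neighborhood of x₀ such that φ ≥ u near x₀ and φ(x₀) = u(x₀), then ∇φ(x₀) = ∇u(x₀) and Δ∞φ(x₀) := φ_x²·φ_{xx} + 2φ_x·φ_y·φ_{xy} + φ_y²·φ_{yy} evaluated at x₀ is strictly positive. -/

import Mathlib

/-!
The series `W` satisfies `r W_r + W_θθ = 0`, and `-(W_θθθ + W_θ)` is, up to the factor `8/π`, the
theta series `∑ r^{mₙ²} cos (mₙ θ)`, which is positive for `0 < r < 1`, `0 ≤ θ < π/4`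
(`Th_pos`). Positivity is derived from a finite form of the Jacobi triple product
(`finite_triple`, `theta_pos`).

Since `W_θ` and `cos θ - sin θ` both vanish at `π/4`, integrating this sign from `π/4` shows that
`W_θ / (cos θ - sin θ)` is increasing in `θ` on `[0, π/4)` (`K_pos`, `W1_ge`). At a point `(s,s)`,
the first-order condition `s cos θ + s sin θ = W_r = -W_θθ / r` at an inner maximizer `r < 1` turns
`K_pos` into negativity of the `θ`-derivative of the function under the minimax (`dtheta_neg`; the
case `r = 1` uses `W_θ(1,θ) ≥ cos θ - sin θ`, which comes from the Leibniz series through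
`W_θ(1,0) = 1`). With the symmetry `θ ↦ π/2 - θ` of `W`, the angle `π/4` is therefore the unique
minimizing angle on the diagonal (`FF_lt`), and any maximizer there lies in `(0,1)`
(`max_interior`).

If `φ` touches `u` from above at `(a,a)`, comparing `φ(s,s)` with the value at a fixed maximizer
`r` identifies `√2 r` with the diagonal derivative of `φ`, so the maximizer `r₀` is unique
(`diag_deriv`). A compactness argument then bounds `u` from below to first order (`u_lower`), and
squeezing against `φ` gives differentiability of `u` with `∇u = ∇φ = (c, c)`, `c = r₀/√2 > 0`
(`squeeze_fderiv`). Hence `Δ∞φ = c² · (d/ds)² φ(s,s)` at `s = a`. The second derivative is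
positive because `φ(s,s)` also dominates the minimax function at `r = r₀ + t (s - a)`, whose second
derivative in `s` is positive for small `t > 0` (`diag_second`).
-/

open Real Set Topology Filter

/-- `mIdx n = 4(n+1) - 2 = 4n + 2`, the odd-indexed frequencies `2, 6, 10, …`. -/
def mIdx (n : ℕ) : ℕ := 4 * n + 2

/-- `W(r,θ) = (8/π) ∑_{n≥1} r^{mₙ²} sin(mₙ θ) / ((mₙ² − 1) mₙ)` with `mₙ = 4n − 2`. -/
noncomputable def W (r θ : ℝ) : ℝ :=
  (8 / π) * ∑' n : ℕ,
    r ^ (mIdx n ^ 2) * Real.sin ((mIdx n : ℝ) * θ) / (((mIdx n : ℝ) ^ 2 - 1) * (mIdx n : ℝ))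

/-- The minimax formula `u(x,y) = min_{θ∈[0,π/2]} max_{r∈[0,1]} ( r(x cos θ + y sin θ) − W(r,θ) )`.
(The extrema are attained, so `⨅`/`⨆` over the compact index sets agree with min/max.) -/
noncomputable def u (x y : ℝ) : ℝ :=
  ⨅ θ : Icc (0 : ℝ) (π / 2), ⨆ r : Icc (0 : ℝ) 1,
    ((r : ℝ) * (x * Real.cos (θ : ℝ) + y * Real.sin (θ : ℝ)) - W (r : ℝ) (θ : ℝ))

/-! ### Finite Jacobi triple product and positivity of the theta series -/

/-- The `q`-Pochhammer symbol `(p; p)_k = ∏_{j=1}^{k} (1 - p^j)`. -/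
noncomputable def poch (p : ℝ) (k : ℕ) : ℝ := ∏ j ∈ Finset.range k, (1 - p ^ (j + 1))

/-- `pochInv p k = 1 / (p; p)_{k-1}`, with the value `0` at `k = 0`; this is the convention
`1 / (p; p)_{-1} = 0`, which makes the recurrence `pochInv_rec` hold at the boundary as well. -/
noncomputable def pochInv (p : ℝ) : ℕ → ℝ
  | 0 => 0
  | k + 1 => (poch p k)⁻¹

/-- The coefficient of `cos ((2n+1)z)` in
`cos z * ∏_{k=1}^{N} (1 + 2 Q^{2k} cos 2z + Q^{4k})`; it is `Q^{n(n+1)}` times a `q`-binomial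
coefficient in base `Q²`. -/
noncomputable def jacCoeff (Q : ℝ) (N n : ℕ) : ℝ :=
  Q ^ (n * (n + 1)) * poch (Q ^ 2) (2 * N + 1) * pochInv (Q ^ 2) (N + 1 - n)
    * pochInv (Q ^ 2) (N + n + 2)

lemma poch_pos {p : ℝ} (h0 : 0 < p) (h1 : p < 1) (k : ℕ) : 0 < poch p k :=
  Finset.prod_pos fun j _ => by
    have := pow_lt_one₀ h0.le h1 (Nat.succ_ne_zero j)
    simpa using this

lemma poch_succ (p : ℝ) (k : ℕ) : poch p (k + 1) = poch p k * (1 - p ^ (k + 1)) :=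
  Finset.prod_range_succ _ _

lemma poch_antitone {p : ℝ} (h0 : 0 < p) (h1 : p < 1) : Antitone (poch p) :=
  antitone_nat_of_succ_le fun k => by
    rw [poch_succ]
    have := poch_pos h0 h1 k
    have : 0 < p ^ (k + 1) := by positivity
    nlinarith

/-- The Pochhammer symbols stay away from `0`, because `log (1 - x) ≥ -x / (1 - x)` and
`∑ p^j` converges. -/
lemma poch_lower {p : ℝ} (h0 : 0 < p) (h1 : p < 1) : ∃ c, 0 < c ∧ ∀ k, c ≤ poch p k := by
  refine ⟨Real.exp (-((1 - p)⁻¹ * (1 - p)⁻¹)), Real.exp_pos _, fun k => ?_⟩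
  have hpos := poch_pos h0 h1 k
  rw [← Real.le_log_iff_exp_le hpos, poch, Real.log_prod]
  · have hterm : ∀ j ∈ Finset.range k, -((1 - p)⁻¹ * p ^ j) ≤ Real.log (1 - p ^ (j + 1)) := by
      intro j _
      have hx1 : p ^ (j + 1) ≤ p := by
        simpa using pow_le_pow_of_le_one h0.le h1.le (Nat.succ_le_succ (Nat.zero_le j))
      have hx0 : 0 < p ^ (j + 1) := by positivity
      have hj : p ^ (j + 1) ≤ p ^ j := pow_le_pow_of_le_one h0.le h1.le (Nat.le_succ j)
      have h := Real.one_sub_inv_le_log_of_pos (x := 1 - p ^ (j + 1)) (by linarith)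
      refine le_trans ?_ h
      have e : 1 - (1 - p ^ (j + 1))⁻¹ = -((1 - p ^ (j + 1))⁻¹ * p ^ (j + 1)) := by
        have : 1 - p ^ (j + 1) ≠ 0 := by linarith
        field_simp
        ring
      rw [e]
      apply neg_le_neg
      have h2 : (1 - p ^ (j + 1))⁻¹ ≤ (1 - p)⁻¹ := by
        apply inv_anti₀ <;> linarith
      have : 0 ≤ (1 - p)⁻¹ := by
        rw [inv_nonneg]; linarith
      gcongr
    refine le_trans ?_ (Finset.sum_le_sum hterm)
    rw [Finset.sum_neg_distrib, ← Finset.mul_sum]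
    apply neg_le_neg
    have hs := (summable_geometric_of_lt_one h0.le h1).sum_le_tsum (Finset.range k)
      (fun i _ => by positivity)
    rw [tsum_geometric_of_lt_one h0.le h1] at hs
    have : 0 ≤ (1 - p)⁻¹ := by
      rw [inv_nonneg]; linarith
    gcongr
  · intro j _
    have := pow_lt_one₀ h0.le h1 (Nat.succ_ne_zero j)
    simp only [Nat.succ_eq_add_one] at this
    linarith

lemma pochInv_rec {p : ℝ} (h0 : 0 < p) (h1 : p < 1) (k : ℕ) :
    pochInv p k = pochInv p (k + 1) * (1 - p ^ k) := by
  cases k with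
  | zero => simp [pochInv]
  | succ k =>
    have a := (poch_pos h0 h1 k).ne'
    have b := (poch_pos h0 h1 (k + 1)).ne'
    simp only [pochInv]
    field_simp
    rw [poch_succ]

/-- `jacCoeff` in the range `n ≤ N` satisfies the recurrence coming from multiplication by
`1 + 2 Q^{2(N+1)} cos 2z + Q^{4(N+1)}`. -/
lemma jacCoeff_rec {Q : ℝ} (h0 : 0 < Q) (h1 : Q < 1) (N n : ℕ) (hn : n ≤ N + 1) :
    jacCoeff Q (N + 1) n = (1 + (Q ^ (2 * (N + 1))) ^ 2) * jacCoeff Q N n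
      + Q ^ (2 * (N + 1)) * ((if n = 0 then jacCoeff Q N 0 else jacCoeff Q N (n - 1))
        + jacCoeff Q N (n + 1)) := by
  have hp0 : 0 < Q ^ 2 := by positivity
  have hp1 : Q ^ 2 < 1 := pow_lt_one₀ h0.le h1 two_ne_zero
  have R := pochInv_rec hp0 hp1
  have E : poch (Q ^ 2) (2 * (N + 1) + 1) = poch (Q ^ 2) (2 * N + 1)
      * (1 - (Q ^ 2) ^ (2 * N + 2)) * (1 - (Q ^ 2) ^ (2 * N + 3)) := by
    rw [show 2 * (N + 1) + 1 = 2 * N + 1 + 1 + 1 by ring, poch_succ, poch_succ]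
  unfold jacCoeff
  rw [E]
  rcases Nat.eq_or_lt_of_le hn with rfl | hlt
  · have e1 : N + 1 + 1 - (N + 1) = 1 := by omega
    have e2 : N + 1 - (N + 1) = 0 := by omega
    have e3 : N + 1 - (N + 1 + 1) = 0 := by omega
    have e4 : N + 1 - (N + 1 - 1) = 1 := by omega
    have e5 : N + 1 - 1 = N := by omega
    rw [e1, e2, e3, e4, e5]
    have r1 := R (N + N + 2)
    have r2 := R (N + N + 3)
    rw [show N + 1 + (N + 1) + 2 = N + N + 3 + 1 by ring]
    rw [if_neg (Nat.succ_ne_zero N), r1, show N + N + 2 + 1 = N + N + 3 by ring, r2]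
    simp only [pochInv]
    ring
  · obtain ⟨j, rfl⟩ := Nat.exists_eq_add_of_le (Nat.lt_succ_iff.mp hlt)
    have e1 : n + j + 1 + 1 - n = j + 2 := by omega
    have e2 : n + j + 1 - n = j + 1 := by omega
    have e3 : n + j + 1 - (n + 1) = j := by omega
    rw [e1, e2, e3]
    cases n with
    | zero =>
      have r1 := R j
      have r2 := R (j + 1)
      have r3 := R (j + 2)
      rw [show 0 + j + 1 + 0 + 2 = j + 3 by ring, show 0 + j + 0 + 2 = j + 2 by ring,
        if_pos rfl, Nat.sub_zero,
        show 0 + j + 1 = j + 1 by ring, r1, r2, show j + 1 + 1 = j + 2 by ring, r3]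
      ring
    | succ n =>
      have e4 : n + 1 + j + 1 - (n + 1 - 1) = j + 2 := by omega
      have e5 : n + 1 - 1 = n := by omega
      rw [if_neg (Nat.succ_ne_zero n), e4, e5]
      have r1 := R j
      have r2 := R (j + 1)
      have r3 := R (n + 1 + j + n + 2)
      have r4 := R (n + 1 + j + n + 3)
      rw [show n + 1 + j + 1 + (n + 1) + 2 = n + 1 + j + n + 4 by ring,
        show n + 1 + j + (n + 1) + 2 = n + 1 + j + n + 3 by ring,
        show n + 1 + j + (n + 1 + 1) + 2 = n + 1 + j + n + 4 by ring, r1,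
        show j + 1 + 1 = j + 2 by ring, r2, r3,
        show n + 1 + j + n + 2 + 1 = n + 1 + j + n + 3 by ring, r4]
      ring

/-- Multiplication of an odd cosine polynomial by `2 cos 2z`. -/
lemma cos_poly_shift (b : ℕ → ℝ) (z : ℝ) (M : ℕ) :
    ∑ n ∈ Finset.range (M + 1), ((if n = 0 then b 0 else b (n - 1)) + b (n + 1))
        * Real.cos ((2 * n + 1) * z)
      = 2 * Real.cos (2 * z) * ∑ n ∈ Finset.range (M + 1), b n * Real.cos ((2 * n + 1) * z)
        + b (M + 1) * Real.cos ((2 * M + 1) * z) - b M * Real.cos ((2 * M + 3) * z) := by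
  have key : ∀ x : ℝ, 2 * Real.cos (2 * z) * Real.cos x
      = Real.cos (x + 2 * z) + Real.cos (x - 2 * z) := by
    intro x
    rw [Real.cos_add, Real.cos_sub]; ring
  induction M with
  | zero =>
    have := key z
    rw [show z - 2 * z = -z by ring, Real.cos_neg, show z + 2 * z = 3 * z by ring] at this
    simp
    linear_combination (-b 0) * this
  | succ M ih =>
    rw [Finset.sum_range_succ, ih, Finset.sum_range_succ _ (M + 1)]
    have := key ((2 * M + 3) * z)
    rw [show (2 * (M : ℝ) + 3) * z + 2 * z = (2 * M + 5) * z by ring,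
      show (2 * (M : ℝ) + 3) * z - 2 * z = (2 * M + 1) * z by ring] at this
    simp only [Nat.succ_ne_zero, if_false, Nat.add_sub_cancel]
    push_cast
    rw [show (2 * ((M : ℝ) + 1) + 1) * z = (2 * M + 3) * z by ring,
      show (2 * ((M : ℝ) + 1) + 3) * z = (2 * M + 5) * z by ring]
    linear_combination (-b (M + 1)) * this

lemma jacCoeff_zero_of_lt {Q : ℝ} {N n : ℕ} (h : N < n) : jacCoeff Q N n = 0 := by
  have : N + 1 - n = 0 := by omega
  simp [jacCoeff, this, pochInv]

/-- The finite Jacobi triple product, in real form. -/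
lemma finite_triple {Q : ℝ} (h0 : 0 < Q) (h1 : Q < 1) (z : ℝ) (N : ℕ) :
    ∑ n ∈ Finset.range (N + 1), jacCoeff Q N n * Real.cos ((2 * n + 1) * z)
      = Real.cos z * ∏ k ∈ Finset.range N,
        (1 + 2 * Q ^ (2 * (k + 1)) * Real.cos (2 * z) + (Q ^ (2 * (k + 1))) ^ 2) := by
  induction N with
  | zero =>
    have hQ : 1 - Q ^ 2 ≠ 0 := by
      have := pow_lt_one₀ h0.le h1 two_ne_zero
      linarith
    simp [jacCoeff, pochInv, poch, hQ]
  | succ N ih =>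
    rw [Finset.prod_range_succ, ← mul_assoc, ← ih]
    have hs := cos_poly_shift (jacCoeff Q N) z (N + 1)
    rw [jacCoeff_zero_of_lt (show N < N + 1 + 1 by omega),
      jacCoeff_zero_of_lt (show N < N + 1 by omega)] at hs
    have hz : ∑ n ∈ Finset.range (N + 1 + 1), jacCoeff Q N n * Real.cos ((2 * n + 1) * z)
        = ∑ n ∈ Finset.range (N + 1), jacCoeff Q N n * Real.cos ((2 * n + 1) * z) := by
      rw [Finset.sum_range_succ _ (N + 1), jacCoeff_zero_of_lt (show N < N + 1 by omega)]
      ring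
    rw [hz] at hs
    have : ∀ n ∈ Finset.range (N + 1 + 1), jacCoeff Q (N + 1) n * Real.cos ((2 * n + 1) * z)
        = (1 + (Q ^ (2 * (N + 1))) ^ 2) * (jacCoeff Q N n * Real.cos ((2 * n + 1) * z))
        + Q ^ (2 * (N + 1)) * (((if n = 0 then jacCoeff Q N 0 else jacCoeff Q N (n - 1))
        + jacCoeff Q N (n + 1)) * Real.cos ((2 * n + 1) * z)) := by
      intro n hn
      rw [jacCoeff_rec h0 h1 N n (by simp at hn; omega)]
      ring
    rw [Finset.sum_congr rfl this, Finset.sum_add_distrib, ← Finset.mul_sum, ← Finset.mul_sum,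
      hz, hs]
    ring

lemma finite_triple_lower {Q : ℝ} (h0 : 0 < Q) (h1 : Q < 1) {z : ℝ} (hz : 0 ≤ Real.cos z)
    (N : ℕ) : Real.cos z * poch (Q ^ 2) N ^ 2
      ≤ ∑ n ∈ Finset.range (N + 1), jacCoeff Q N n * Real.cos ((2 * n + 1) * z) := by
  rw [finite_triple h0 h1, poch, ← Finset.prod_pow]
  apply mul_le_mul_of_nonneg_left _ hz
  apply Finset.prod_le_prod
  · intro i _; positivity
  · intro i _
    rw [← pow_mul]
    have := Real.neg_one_le_cos (2 * z)
    have h : 0 < Q ^ (2 * (i + 1)) := by positivity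
    nlinarith

/-- Positivity of the theta series `∑ Q^{n(n+1)} cos ((2n+1)z)`, obtained by letting `N → ∞` in
the finite triple product. -/
lemma theta_pos {Q : ℝ} (h0 : 0 < Q) (h1 : Q < 1) {z : ℝ} (hz : 0 < Real.cos z) :
    0 < ∑' n : ℕ, Q ^ (n * (n + 1)) * Real.cos ((2 * n + 1) * z) := by
  have hp0 : 0 < Q ^ 2 := by positivity
  have hp1 : Q ^ 2 < 1 := pow_lt_one₀ h0.le h1 two_ne_zero
  obtain ⟨c, hc, hcl⟩ := poch_lower hp0 hp1
  have hanti := poch_antitone hp0 hp1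
  have hpos := poch_pos hp0 hp1
  obtain ⟨L, hL⟩ : ∃ L, Tendsto (poch (Q ^ 2)) atTop (𝓝 L) :=
    ⟨_, tendsto_atTop_ciInf hanti ⟨c, by rintro _ ⟨k, rfl⟩; exact hcl k⟩⟩
  have hcL : c ≤ L := ge_of_tendsto' hL hcl
  have hL0 : 0 < L := hc.trans_le hcL
  have hlim : Tendsto (fun N => ∑' n : ℕ, jacCoeff Q N n * Real.cos ((2 * n + 1) * z)) atTop
      (𝓝 (∑' n : ℕ, L⁻¹ * (Q ^ (n * (n + 1)) * Real.cos ((2 * n + 1) * z)))) := by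
    apply tendsto_tsum_of_dominated_convergence (bound := fun n => c⁻¹ * Q ^ n)
    · exact (summable_geometric_of_lt_one h0.le h1).mul_left _
    · intro n
      have t1 : Tendsto (fun N => poch (Q ^ 2) (2 * N + 1)) atTop (𝓝 L) :=
        hL.comp (tendsto_atTop_mono (fun N => by simp only [id]; omega) tendsto_id)
      have t2 : Tendsto (fun N => (poch (Q ^ 2) (N - n))⁻¹) atTop (𝓝 L⁻¹) :=
        (hL.comp (tendsto_sub_atTop_nat n)).inv₀ hL0.ne'
      have t3 : Tendsto (fun N => (poch (Q ^ 2) (N + n + 1))⁻¹) atTop (𝓝 L⁻¹) :=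
        (hL.comp (tendsto_atTop_mono (fun N => by simp only [id]; omega) tendsto_id)).inv₀ hL0.ne'
      have t := ((((t1.const_mul (Q ^ (n * (n + 1)))).mul t2).mul t3)).mul_const
        (Real.cos ((2 * n + 1) * z))
      have e : Q ^ (n * (n + 1)) * L * L⁻¹ * L⁻¹ * Real.cos ((2 * n + 1) * z)
          = L⁻¹ * (Q ^ (n * (n + 1)) * Real.cos ((2 * n + 1) * z)) := by
        field_simp
      rw [e] at t
      refine t.congr' ?_
      filter_upwards [eventually_ge_atTop n] with N hN
      have e1 : N + 1 - n = (N - n) + 1 := by omega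
      simp only [jacCoeff, e1, pochInv]
    · refine Eventually.of_forall fun N n => ?_
      rcases lt_or_ge N n with h | h
      · rw [jacCoeff_zero_of_lt h]; simp; positivity
      · have e1 : N + 1 - n = (N - n) + 1 := by omega
        rw [Real.norm_eq_abs, abs_mul]
        have hcos := Real.abs_cos_le_one ((2 * n + 1) * z)
        have hJ : |jacCoeff Q N n| ≤ c⁻¹ * Q ^ n := by
          simp only [jacCoeff, e1, pochInv]
          rw [abs_of_pos (by have := hpos (2 * N + 1); have := hpos (N - n)
                             have := hpos (N + n + 1); positivity)]
          have q1 : poch (Q ^ 2) (2 * N + 1) * (poch (Q ^ 2) (N + n + 1))⁻¹ ≤ 1 := by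
            rw [mul_inv_le_iff₀ (hpos _), one_mul]
            exact hanti (by omega)
          have q2 : (poch (Q ^ 2) (N - n))⁻¹ ≤ c⁻¹ := inv_anti₀ hc (hcl _)
          have q3 : Q ^ (n * (n + 1)) ≤ Q ^ n := pow_le_pow_of_le_one h0.le h1.le (by nlinarith)
          have q4 : 0 ≤ (poch (Q ^ 2) (N - n))⁻¹ := by have := hpos (N - n); positivity
          calc Q ^ (n * (n + 1)) * poch (Q ^ 2) (2 * N + 1) * (poch (Q ^ 2) (N - n))⁻¹
                * (poch (Q ^ 2) (N + n + 1))⁻¹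
              = (poch (Q ^ 2) (N - n))⁻¹ * Q ^ (n * (n + 1)) *
                (poch (Q ^ 2) (2 * N + 1) * (poch (Q ^ 2) (N + n + 1))⁻¹) := by ring
            _ ≤ (poch (Q ^ 2) (N - n))⁻¹ * Q ^ (n * (n + 1)) * 1 := by
                gcongr
            _ ≤ c⁻¹ * Q ^ n := by
                rw [mul_one]; gcongr
        calc |jacCoeff Q N n| * |Real.cos ((2 * n + 1) * z)| ≤ (c⁻¹ * Q ^ n) * 1 := by
              gcongr
          _ = c⁻¹ * Q ^ n := mul_one _
  have hlow : ∀ N, Real.cos z * c ^ 2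
      ≤ ∑' n : ℕ, jacCoeff Q N n * Real.cos ((2 * n + 1) * z) := by
    intro N
    rw [tsum_eq_sum (s := Finset.range (N + 1))]
    · refine le_trans ?_ (finite_triple_lower h0 h1 hz.le N)
      have := hcl N
      gcongr
    · intro n hn
      rw [jacCoeff_zero_of_lt (by simp at hn; omega), zero_mul]
  have h := ge_of_tendsto' hlim hlow
  rw [tsum_mul_left] at h
  have h2 : 0 < L⁻¹ * ∑' n : ℕ, Q ^ (n * (n + 1)) * Real.cos ((2 * n + 1) * z) :=
    lt_of_lt_of_le (by positivity) h
  exact pos_of_mul_pos_right h2 (by positivity)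

/-! ### Termwise calculus for `W` -/

lemma mIdx_cast (n : ℕ) : (mIdx n : ℝ) = 4 * n + 2 := by simp [mIdx]

lemma two_le_mIdx (n : ℕ) : (2 : ℝ) ≤ mIdx n := by
  rw [mIdx_cast]; have : (0 : ℝ) ≤ n := n.cast_nonneg
  linarith

lemma mIdx_sq_strictMono : StrictMono (fun n => mIdx n ^ 2) := by
  intro a b h
  simp only [mIdx]
  gcongr

/-- `∑ 1 / (mₙ² - 1)` converges. -/
lemma summable_inv_mIdx : Summable (fun n : ℕ => 1 / ((mIdx n : ℝ) ^ 2 - 1)) := by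
  have h := (summable_nat_add_iff 1).mpr (Real.summable_one_div_nat_pow.mpr one_lt_two)
  refine Summable.of_nonneg_of_le (fun n => ?_) (fun n => ?_) h
  · have := two_le_mIdx n
    apply div_nonneg zero_le_one; nlinarith
  · have := two_le_mIdx n
    have h0 : (0 : ℝ) ≤ n := n.cast_nonneg
    rw [mIdx_cast] at *
    push_cast
    apply one_div_le_one_div_of_le
    · positivity
    · nlinarith

lemma pow_le_of_unit {r : ℝ} (h0 : 0 ≤ r) (h1 : r ≤ 1) (n : ℕ) :
    0 ≤ r ^ (mIdx n ^ 2) ∧ r ^ (mIdx n ^ 2) ≤ 1 :=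
  ⟨by positivity, pow_le_one₀ h0 h1⟩

/-- A nonnegative series `∑ k^q ρ^k` sampled along the exponents `mₙ²` converges. -/
lemma summable_geom_mIdx {ρ : ℝ} (h0 : 0 ≤ ρ) (h1 : ρ < 1) (q : ℕ) :
    Summable (fun n => ((mIdx n ^ 2 : ℕ) : ℝ) ^ q * ρ ^ (mIdx n ^ 2)) := by
  have h := summable_pow_mul_geometric_of_norm_lt_one (R := ℝ) q
    (r := ρ) (by rwa [Real.norm_of_nonneg h0])
  exact h.comp_injective mIdx_sq_strictMono.injective

lemma hasDerivAt_sin_series (c : ℕ → ℝ) (h : Summable fun n => |c n| * mIdx n) (θ : ℝ) :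
    HasDerivAt (fun θ => ∑' n, c n * Real.sin (mIdx n * θ))
      (∑' n, c n * mIdx n * Real.cos (mIdx n * θ)) θ := by
  refine hasDerivAt_tsum (g := fun n θ => c n * Real.sin (mIdx n * θ))
    (g' := fun n θ => c n * mIdx n * Real.cos (mIdx n * θ)) (y₀ := 0) h ?_ ?_ ?_ θ
  · intro n y
    have := ((((hasDerivAt_id y).const_mul (mIdx n : ℝ))).sin).const_mul (c n)
    exact this.congr_deriv (by simp only [id]; ring)
  · intro n y
    rw [Real.norm_eq_abs, abs_mul, abs_mul, Nat.abs_cast]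
    exact mul_le_of_le_one_right (by positivity) (Real.abs_cos_le_one _)
  · simp

lemma hasDerivAt_cos_series (c : ℕ → ℝ) (h : Summable fun n => |c n| * mIdx n) (θ : ℝ) :
    HasDerivAt (fun θ => ∑' n, c n * Real.cos (mIdx n * θ))
      (∑' n, -(c n * mIdx n * Real.sin (mIdx n * θ))) θ := by
  refine hasDerivAt_tsum (g := fun n θ => c n * Real.cos (mIdx n * θ))
    (g' := fun n θ => -(c n * mIdx n * Real.sin (mIdx n * θ))) (y₀ := 0) h ?_ ?_ ?_ θ
  · intro n y
    have := ((((hasDerivAt_id y).const_mul (mIdx n : ℝ))).cos).const_mul (c n)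
    exact this.congr_deriv (by simp only [id]; ring)
  · intro n y
    rw [norm_neg, Real.norm_eq_abs, abs_mul, abs_mul, Nat.abs_cast]
    exact mul_le_of_le_one_right (by positivity) (Real.abs_sin_le_one _)
  · have : Summable (fun n => |c n|) := by
      refine Summable.of_nonneg_of_le (fun n => abs_nonneg _) (fun n => ?_) h
      have := two_le_mIdx n
      exact le_mul_of_one_le_right (abs_nonneg _) (by linarith)
    simpa using this.of_abs

/-- Termwise `∂W/∂θ`. -/
noncomputable def W1 (r θ : ℝ) : ℝ :=
  (8 / π) * ∑' n : ℕ, r ^ (mIdx n ^ 2) / ((mIdx n : ℝ) ^ 2 - 1) * Real.cos (mIdx n * θ)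

/-- Termwise `∂²W/∂θ²`. -/
noncomputable def W2 (r θ : ℝ) : ℝ :=
  (8 / π) * ∑' n : ℕ,
    -(r ^ (mIdx n ^ 2) / ((mIdx n : ℝ) ^ 2 - 1) * mIdx n * Real.sin (mIdx n * θ))

/-- Termwise `∂W/∂r`. -/
noncomputable def Wr (r θ : ℝ) : ℝ :=
  (8 / π) * ∑' n : ℕ,
    (mIdx n / ((mIdx n : ℝ) ^ 2 - 1) * Real.sin (mIdx n * θ)) * r ^ (mIdx n ^ 2 - 1)

/-- The theta series `(8/π) ∑ r^{mₙ²} cos (mₙ θ) = -(∂³W/∂θ³ + ∂W/∂θ)`. -/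
noncomputable def Th (r θ : ℝ) : ℝ :=
  (8 / π) * ∑' n : ℕ, r ^ (mIdx n ^ 2) * Real.cos (mIdx n * θ)

lemma sq_sub_pos (n : ℕ) : 0 < (mIdx n : ℝ) ^ 2 - 1 := by
  have := two_le_mIdx n
  nlinarith

lemma hasDerivAt_W {r : ℝ} (h0 : 0 ≤ r) (h1 : r ≤ 1) (θ : ℝ) :
    HasDerivAt (W r) (W1 r θ) θ := by
  have h := (hasDerivAt_sin_series
    (fun n => r ^ (mIdx n ^ 2) / (((mIdx n : ℝ) ^ 2 - 1) * mIdx n)) ?_ θ).const_mul (8 / π)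
  · have e : W r = fun θ => 8 / π * ∑' n : ℕ,
        r ^ (mIdx n ^ 2) / (((mIdx n : ℝ) ^ 2 - 1) * mIdx n) * Real.sin (mIdx n * θ) := by
      funext θ
      rw [W]
      congr 1
      exact tsum_congr fun n => by ring
    rw [e]
    refine h.congr_deriv ?_
    · rw [W1]
      congr 1
      refine tsum_congr fun n => ?_
      have := sq_sub_pos n
      have := two_le_mIdx n
      field_simp
  · refine Summable.of_nonneg_of_le (fun n => by positivity) (fun n => ?_) summable_inv_mIdx
    have := sq_sub_pos n
    have h2 := two_le_mIdx n
    obtain ⟨p0, p1⟩ := pow_le_of_unit h0 h1 n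
    rw [abs_of_nonneg (by positivity)]
    have : r ^ (mIdx n ^ 2) / (((mIdx n : ℝ) ^ 2 - 1) * mIdx n) * mIdx n
      = r ^ (mIdx n ^ 2) / ((mIdx n : ℝ) ^ 2 - 1) := by field_simp
    rw [this]
    gcongr

lemma summable_W1_coeff {r : ℝ} (h0 : 0 ≤ r) (h1 : r < 1) :
    Summable fun n => |r ^ (mIdx n ^ 2) / ((mIdx n : ℝ) ^ 2 - 1)| * (mIdx n : ℝ) := by
  refine Summable.of_nonneg_of_le (fun n => by positivity) (fun n => ?_)
    (summable_geom_mIdx h0 h1 0)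
  have := sq_sub_pos n
  have h2 := two_le_mIdx n
  obtain ⟨p0, p1⟩ := pow_le_of_unit h0 h1.le n
  rw [abs_of_nonneg (by positivity), pow_zero, one_mul, div_mul_eq_mul_div, div_le_iff₀ this]
  have : (mIdx n : ℝ) ≤ (mIdx n : ℝ) ^ 2 - 1 := by nlinarith
  gcongr

lemma summable_W2_coeff {r : ℝ} (h0 : 0 ≤ r) (h1 : r < 1) :
    Summable fun n =>
    |-(r ^ (mIdx n ^ 2) / ((mIdx n : ℝ) ^ 2 - 1) * mIdx n)| * (mIdx n : ℝ) := by
  refine Summable.of_nonneg_of_le (fun n => by positivity) (fun n => ?_)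
    (summable_geom_mIdx h0 h1 1)
  have := sq_sub_pos n
  have h2 := two_le_mIdx n
  obtain ⟨p0, p1⟩ := pow_le_of_unit h0 h1.le n
  rw [abs_neg, abs_of_nonneg (by positivity), pow_one, div_mul_eq_mul_div, div_mul_eq_mul_div,
    div_le_iff₀ this]
  push_cast
  have : (1 : ℝ) ≤ (mIdx n : ℝ) ^ 2 - 1 := by nlinarith
  have : 0 ≤ r ^ (mIdx n ^ 2) * (mIdx n : ℝ) ^ 2 := by positivity
  nlinarith

lemma hasDerivAt_W1 {r : ℝ} (h0 : 0 ≤ r) (h1 : r < 1) (θ : ℝ) :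
    HasDerivAt (W1 r) (W2 r θ) θ :=
  (hasDerivAt_cos_series _ (summable_W1_coeff h0 h1) θ).const_mul (8 / π)

lemma hasDerivAt_W2 {r : ℝ} (h0 : 0 ≤ r) (h1 : r < 1) (θ : ℝ) :
    HasDerivAt (W2 r) (-Th r θ - W1 r θ) θ := by
  have h := (hasDerivAt_sin_series _ (summable_W2_coeff h0 h1) θ).const_mul (8 / π)
  have e : W2 r = fun θ => 8 / π * ∑' n : ℕ,
      -(r ^ (mIdx n ^ 2) / ((mIdx n : ℝ) ^ 2 - 1) * mIdx n) * Real.sin (mIdx n * θ) := by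
    funext θ
    rw [W2]
    congr 1
    exact tsum_congr fun n => by ring
  rw [e]
  refine h.congr_deriv ?_
  · rw [Th, W1]
    have s1 : Summable fun n => r ^ (mIdx n ^ 2) * Real.cos (mIdx n * θ) := by
      have := summable_geom_mIdx h0 h1 0
      simp only [pow_zero, one_mul] at this
      refine Summable.of_norm_bounded this fun n => ?_
      obtain ⟨p0, p1⟩ := pow_le_of_unit h0 h1.le n
      rw [Real.norm_eq_abs, abs_mul, abs_of_nonneg p0]
      exact mul_le_of_le_one_right p0 (Real.abs_cos_le_one _)
    have s2 : Summable fun n => r ^ (mIdx n ^ 2) / ((mIdx n : ℝ) ^ 2 - 1)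
        * Real.cos (mIdx n * θ) := by
      refine Summable.of_norm_bounded (summable_W1_coeff h0 h1) fun n => ?_
      rw [Real.norm_eq_abs, abs_mul]
      have := two_le_mIdx n
      have := Real.abs_cos_le_one (mIdx n * θ)
      gcongr
      linarith
    rw [show ∀ x y : ℝ, -(8 / π * x) - 8 / π * y = 8 / π * -(x + y) by intros; ring,
      ← s1.tsum_add s2, ← tsum_neg]
    congr 1
    refine tsum_congr fun n => ?_
    have := sq_sub_pos n
    field_simp
    ring

/-- Termwise differentiation of a sparse power series with coefficients bounded by `1`. -/
lemma hasDerivAt_pow_series (c : ℕ → ℝ) (hc : ∀ n, |c n| ≤ 1) (k : ℕ → ℕ) (hk : StrictMono k)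
    {r : ℝ} (h0 : 0 < r) (h1 : r < 1) :
    HasDerivAt (fun r => ∑' n, c n * r ^ k n) (∑' n, c n * (k n * r ^ (k n - 1))) r := by
  obtain ⟨ρ, hr, hρ⟩ := exists_between h1
  have hρ0 : 0 < ρ := h0.trans hr
  have hsum : Summable (fun n => (k n : ℝ) * ρ ^ (k n - 1)) := by
    have h := summable_pow_mul_geometric_of_norm_lt_one (R := ℝ) 1
      (r := ρ) (by rwa [Real.norm_of_nonneg hρ0.le])
    have h2 := (h.comp_injective hk.injective).mul_left ρ⁻¹
    refine h2.congr fun n => ?_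
    simp only [Function.comp, pow_one]
    rcases Nat.eq_zero_or_pos (k n) with e | e
    · simp [e]
    · obtain ⟨j, hj⟩ := Nat.exists_eq_succ_of_ne_zero e.ne'
      rw [hj, Nat.succ_sub_one, pow_succ]
      field_simp
  have hsum0 : Summable (fun n => c n * r ^ k n) := by
    refine Summable.of_norm_bounded
      ((summable_geometric_of_lt_one h0.le h1).comp_injective hk.injective) fun n => ?_
    rw [Real.norm_eq_abs, abs_mul, abs_of_nonneg (by positivity : 0 ≤ r ^ k n)]
    exact mul_le_of_le_one_left (by positivity) (hc n)
  refine hasDerivAt_tsum_of_isPreconnected (g := fun n r => c n * r ^ k n)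
    (g' := fun n r => c n * (k n * r ^ (k n - 1))) (t := Ioo 0 ρ) (y₀ := r) hsum isOpen_Ioo
    isPreconnected_Ioo ?_ ?_ ?_ ?_ ?_
  · intro n y _
    exact (hasDerivAt_pow (k n) y).const_mul (c n)
  · intro n y hy
    have hy0 := hy.1.le
    rw [Real.norm_eq_abs, abs_mul, abs_of_nonneg (by positivity : 0 ≤ (k n : ℝ) * y ^ (k n - 1))]
    have := hy.2.le
    calc |c n| * (k n * y ^ (k n - 1)) ≤ 1 * (k n * ρ ^ (k n - 1)) := by
          gcongr
          exact hc n
      _ = _ := one_mul _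
  · exact ⟨h0, hr⟩
  · exact hsum0
  · exact ⟨h0, hr⟩

lemma hasDerivAt_W_r {r : ℝ} (h0 : 0 < r) (h1 : r < 1) (θ : ℝ) :
    HasDerivAt (fun r => W r θ) (Wr r θ) r := by
  have h := (hasDerivAt_pow_series
    (fun n => Real.sin (mIdx n * θ) / (((mIdx n : ℝ) ^ 2 - 1) * mIdx n)) (fun n => ?_)
    _ mIdx_sq_strictMono h0 h1).const_mul (8 / π)
  · have e : (fun r => W r θ) = fun r => 8 / π * ∑' n : ℕ,
        Real.sin (mIdx n * θ) / (((mIdx n : ℝ) ^ 2 - 1) * mIdx n) * r ^ (mIdx n ^ 2) := by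
      funext r
      rw [W]
      congr 1
      exact tsum_congr fun n => by ring
    rw [e]
    refine h.congr_deriv ?_
    · rw [Wr]
      congr 1
      refine tsum_congr fun n => ?_
      have := sq_sub_pos n
      have := two_le_mIdx n
      push_cast
      field_simp
  · have := sq_sub_pos n
    have h2 := two_le_mIdx n
    rw [abs_div, abs_of_pos (by positivity : 0 < ((mIdx n : ℝ) ^ 2 - 1) * mIdx n),
      div_le_one (by positivity)]
    refine (Real.abs_sin_le_one _).trans ?_
    nlinarith

lemma exists_hasDerivAt_Wr {r : ℝ} (h0 : 0 < r) (h1 : r < 1) (θ : ℝ) :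
    ∃ d, HasDerivAt (fun r => Wr r θ) d r := by
  refine ⟨_, (hasDerivAt_pow_series
    (fun n => mIdx n / ((mIdx n : ℝ) ^ 2 - 1) * Real.sin (mIdx n * θ)) (fun n => ?_)
    (fun n => mIdx n ^ 2 - 1) ?_ h0 h1).const_mul (8 / π)⟩
  · have := sq_sub_pos n
    have h2 := two_le_mIdx n
    rw [abs_mul, abs_of_pos (by positivity)]
    refine mul_le_one₀ ?_ (abs_nonneg _) (Real.abs_sin_le_one _)
    rw [div_le_one this]
    nlinarith
  · intro a b h
    have h2 := mIdx_sq_strictMono h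
    have : 0 < mIdx a ^ 2 := by simp [mIdx]
    simp only at h2 ⊢
    omega

/-- `W` solves the equation `r ∂W/∂r + ∂²W/∂θ² = 0`. -/
lemma r_mul_Wr (r θ : ℝ) : r * Wr r θ = -W2 r θ := by
  rw [Wr, W2, mul_left_comm, ← tsum_mul_left, ← mul_neg, ← tsum_neg]
  congr 1
  refine tsum_congr fun n => ?_
  have : r ^ (mIdx n ^ 2) = r * r ^ (mIdx n ^ 2 - 1) := by
    have : mIdx n ^ 2 ≠ 0 := by simp [mIdx]
    rw [mul_pow_sub_one this]
  rw [this]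
  ring

lemma Th_pos {r θ : ℝ} (h0 : 0 < r) (h1 : r < 1) (hθ : 0 ≤ θ) (hθ' : θ < π / 4) :
    0 < Th r θ := by
  have h := theta_pos (Q := r ^ 16) (by positivity) (pow_lt_one₀ h0.le h1 (by norm_num))
    (z := 2 * θ) (Real.cos_pos_of_mem_Ioo ⟨by linarith [Real.pi_pos], by linarith⟩)
  rw [Th]
  have e : ∑' n : ℕ, r ^ (mIdx n ^ 2) * Real.cos (mIdx n * θ)
      = r ^ 4 * ∑' n : ℕ, (r ^ 16) ^ (n * (n + 1)) * Real.cos ((2 * n + 1) * (2 * θ)) := by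
    rw [← tsum_mul_left]
    refine tsum_congr fun n => ?_
    rw [mIdx_cast, ← pow_mul, ← mul_assoc, ← pow_add]
    congr 2
    · simp only [mIdx]; ring
    · ring
  rw [e]
  positivity

lemma W_symm (r θ : ℝ) : W r (π / 2 - θ) = W r θ := by
  rw [W, W]
  congr 1
  refine tsum_congr fun n => ?_
  have : (mIdx n : ℝ) * (π / 2 - θ) = π - mIdx n * θ + n * (2 * π) := by
    rw [mIdx_cast]; ring
  rw [this, Real.sin_add_nat_mul_two_pi, Real.sin_pi_sub]

lemma W1_pi_div_four (r : ℝ) : W1 r (π / 4) = 0 := by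
  have : ∀ n : ℕ, Real.cos (mIdx n * (π / 4)) = 0 := by
    intro n
    rw [mIdx_cast, show (4 * (n : ℝ) + 2) * (π / 4) = π / 2 + n * π by ring,
      Real.cos_add_nat_mul_pi]
    simp
  simp [W1, this]

lemma W_zero_left (θ : ℝ) : W 0 θ = 0 := by
  have : ∀ n, mIdx n ^ 2 ≠ 0 := by intro n; simp [mIdx]
  simp only [W, zero_pow (this _), zero_mul, zero_div, tsum_zero, mul_zero]

/-- `W = O(r⁴)` uniformly in `θ`, since all exponents are at least `4`. -/
lemma W_le : ∃ C, 0 ≤ C ∧ ∀ r θ, 0 ≤ r → r ≤ 1 → W r θ ≤ C * r ^ 4 := by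
  refine ⟨8 / π * ∑' n : ℕ, 1 / ((mIdx n : ℝ) ^ 2 - 1), ?_, fun r θ h0 h1 => ?_⟩
  · have : 0 ≤ ∑' n : ℕ, 1 / ((mIdx n : ℝ) ^ 2 - 1) := tsum_nonneg fun n => by
      have := sq_sub_pos n; positivity
    positivity
  · rw [W, mul_assoc, ← tsum_mul_right]
    have hb : ∀ n, ‖r ^ (mIdx n ^ 2) * Real.sin (mIdx n * θ) / (((mIdx n : ℝ) ^ 2 - 1) * mIdx n)‖
        ≤ 1 / ((mIdx n : ℝ) ^ 2 - 1) * r ^ 4 := by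
      intro n
      have h3 := sq_sub_pos n
      have h2 := two_le_mIdx n
      have h4 : 4 ≤ mIdx n ^ 2 := by simp only [mIdx]; nlinarith [Nat.zero_le n, Nat.zero_le (n ^ 2)]
      have p : r ^ (mIdx n ^ 2) ≤ r ^ 4 := pow_le_pow_of_le_one h0 h1 h4
      rw [Real.norm_eq_abs, abs_div, abs_mul, abs_of_nonneg (by positivity : 0 ≤ r ^ (mIdx n ^ 2)),
        abs_of_pos (by positivity : 0 < ((mIdx n : ℝ) ^ 2 - 1) * mIdx n), div_le_iff₀ (by positivity)]
      calc r ^ (mIdx n ^ 2) * |Real.sin (mIdx n * θ)| ≤ r ^ 4 * 1 := by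
            gcongr; exact Real.abs_sin_le_one _
        _ ≤ r ^ 4 * mIdx n := by gcongr; linarith
        _ = _ := by field_simp
    have hs := summable_inv_mIdx.mul_right (r ^ 4)
    have : ∑' n, r ^ (mIdx n ^ 2) * Real.sin (mIdx n * θ) / (((mIdx n : ℝ) ^ 2 - 1) * mIdx n)
        ≤ ∑' n, 1 / ((mIdx n : ℝ) ^ 2 - 1) * r ^ 4 :=
      Summable.tsum_le_tsum (fun n => (le_abs_self _).trans (hb n))
        (Summable.of_norm_bounded hs hb) hs
    have hpi := Real.pi_pos
    gcongr

lemma W_continuousOn : ContinuousOn (fun q : ℝ × ℝ => W q.1 q.2) (Icc 0 1 ×ˢ univ) := by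
  unfold W
  apply ContinuousOn.mul continuousOn_const
  apply continuousOn_tsum (u := fun n => 1 / ((mIdx n : ℝ) ^ 2 - 1))
  · intro n; fun_prop
  · exact summable_inv_mIdx
  · rintro n ⟨r, θ⟩ ⟨⟨h0, h1⟩, -⟩
    have h3 := sq_sub_pos n
    have h2 := two_le_mIdx n
    obtain ⟨p0, p1⟩ := pow_le_of_unit h0 h1 n
    simp only at h0 h1 ⊢
    rw [Real.norm_eq_abs, abs_div, abs_mul, abs_of_nonneg (by positivity : 0 ≤ r ^ (mIdx n ^ 2)),
      abs_of_pos (by positivity : 0 < ((mIdx n : ℝ) ^ 2 - 1) * mIdx n),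
      div_le_div_iff₀ (by positivity) h3]
    have := Real.abs_sin_le_one (mIdx n * θ)
    calc r ^ (mIdx n ^ 2) * |Real.sin (mIdx n * θ)| * ((mIdx n : ℝ) ^ 2 - 1)
        ≤ 1 * 1 * ((mIdx n : ℝ) ^ 2 - 1) := by gcongr
      _ ≤ 1 * (((mIdx n : ℝ) ^ 2 - 1) * mIdx n) := by nlinarith

lemma W1_continuousOn (θ : ℝ) : ContinuousOn (fun r => W1 r θ) (Icc 0 1) := by
  unfold W1
  apply ContinuousOn.mul continuousOn_const
  apply continuousOn_tsum (u := fun n => 1 / ((mIdx n : ℝ) ^ 2 - 1))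
  · intro n; fun_prop
  · exact summable_inv_mIdx
  · rintro n r ⟨h0, h1⟩
    have h3 := sq_sub_pos n
    obtain ⟨p0, p1⟩ := pow_le_of_unit h0 h1 n
    have := Real.abs_cos_le_one (mIdx n * θ)
    rw [Real.norm_eq_abs, abs_mul, abs_of_nonneg (by positivity)]
    calc r ^ (mIdx n ^ 2) / ((mIdx n : ℝ) ^ 2 - 1) * |Real.cos (mIdx n * θ)|
        ≤ 1 / ((mIdx n : ℝ) ^ 2 - 1) * 1 := by gcongr
      _ = _ := mul_one _

/-- `∂W/∂θ (1, 0) = 1`: grouping the Leibniz series for `π/4` in pairs gives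
`∑ 1 / (mₙ² - 1) = π/8`. -/
lemma W1_one_zero : W1 1 0 = 1 := by
  have hL := Real.tendsto_sum_pi_div_four
  have h2 : Tendsto (fun N : ℕ => ∑ i ∈ Finset.range (2 * N), (-1 : ℝ) ^ i / (2 * i + 1)) atTop
      (𝓝 (π / 4)) :=
    hL.comp (tendsto_atTop_mono (fun N => by simp only [id]; omega) tendsto_id)
  have h3 : ∀ N : ℕ, ∑ i ∈ Finset.range (2 * N), (-1 : ℝ) ^ i / (2 * i + 1)
      = ∑ n ∈ Finset.range N, 2 * (1 / ((mIdx n : ℝ) ^ 2 - 1)) := by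
    intro N
    induction N with
    | zero => simp
    | succ N ih =>
      rw [show 2 * (N + 1) = 2 * N + 1 + 1 by ring, Finset.sum_range_succ, Finset.sum_range_succ,
        ih, Finset.sum_range_succ, mIdx_cast, pow_succ, pow_mul]
      have h0 : (0 : ℝ) ≤ N := N.cast_nonneg
      have e : (4 * (N : ℝ) + 2) ^ 2 - 1 = (4 * N + 1) * (4 * N + 3) := by ring
      rw [e]
      push_cast
      field_simp
      ring
  have h4 : HasSum (fun n : ℕ => 2 * (1 / ((mIdx n : ℝ) ^ 2 - 1))) (π / 4) := by
    rw [(summable_inv_mIdx.mul_left 2).hasSum_iff_tendsto_nat]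
    exact h2.congr h3
  have h5 := h4.tsum_eq
  rw [tsum_mul_left] at h5
  simp only [W1, one_pow, mul_zero, Real.cos_zero, mul_one]
  have hpi := Real.pi_pos
  rw [show ∑' n : ℕ, 1 / ((mIdx n : ℝ) ^ 2 - 1) = π / 8 by linarith]
  field_simp

/-! ### Sign conditions for the derivatives of `W` on `0 ≤ θ ≤ π/4` -/

lemma cos_sub_sin_pos {θ : ℝ} (hθ : 0 ≤ θ) (hθ' : θ < π / 4) :
    0 < Real.cos θ - Real.sin θ := by
  have h1 : Real.sin θ < Real.sin (π / 4) := by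
    apply Real.sin_lt_sin_of_lt_of_le_pi_div_two <;> linarith [Real.pi_pos]
  have h2 : Real.cos (π / 4) < Real.cos θ := by
    apply Real.cos_lt_cos_of_nonneg_of_le_pi_div_two <;> linarith [Real.pi_pos]
  rw [Real.sin_pi_div_four] at h1
  rw [Real.cos_pi_div_four] at h2
  linarith

lemma cos_add_sin_pos {θ : ℝ} (hθ : 0 ≤ θ) (hθ' : θ ≤ π / 4) :
    0 < Real.cos θ + Real.sin θ := by
  have h1 := Real.sin_nonneg_of_nonneg_of_le_pi hθ (by linarith [Real.pi_pos])
  have h2 : 0 < Real.cos θ := Real.cos_pos_of_mem_Ioo ⟨by linarith [Real.pi_pos],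
    by linarith [Real.pi_pos]⟩
  linarith

/-- The numerator of `∂/∂θ (W_θ / (cos θ - sin θ))` is positive: it vanishes at `π/4` and its
`θ`-derivative is `-(cos θ - sin θ)` times the theta series. -/
lemma K_pos {r θ : ℝ} (h0 : 0 < r) (h1 : r < 1) (hθ : 0 ≤ θ) (hθ' : θ < π / 4) :
    0 < W2 r θ * (Real.cos θ - Real.sin θ) + W1 r θ * (Real.cos θ + Real.sin θ) := by
  set K : ℝ → ℝ := fun θ =>
    W2 r θ * (Real.cos θ - Real.sin θ) + W1 r θ * (Real.cos θ + Real.sin θ) with hK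
  have hd : ∀ x, HasDerivAt K (-Th r x * (Real.cos x - Real.sin x)) x := by
    intro x
    have h := ((hasDerivAt_W2 h0.le h1 x).mul ((Real.hasDerivAt_cos x).sub
      (Real.hasDerivAt_sin x))).add ((hasDerivAt_W1 h0.le h1 x).mul
      ((Real.hasDerivAt_cos x).add (Real.hasDerivAt_sin x)))
    refine h.congr_deriv ?_
    simp only [Pi.sub_apply, Pi.add_apply]
    ring
  have hanti : StrictAntiOn K (Icc 0 (π / 4)) := by
    apply strictAntiOn_of_deriv_neg (convex_Icc _ _)
    · exact fun x _ => (hd x).continuousAt.continuousWithinAt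
    · intro x hx
      rw [interior_Icc] at hx
      rw [(hd x).deriv]
      have := Th_pos h0 h1 hx.1.le hx.2
      have := cos_sub_sin_pos hx.1.le hx.2
      nlinarith
  have h := hanti ⟨hθ, hθ'.le⟩ ⟨by linarith, le_refl _⟩ hθ'
  have h4 : K (π / 4) = 0 := by simp [hK, W1_pi_div_four]
  rw [h4] at h
  exact h

lemma W1_ge {r θ : ℝ} (h0 : 0 < r) (h1 : r < 1) (hθ : 0 ≤ θ) (hθ' : θ ≤ π / 4) :
    W1 r 0 * (Real.cos θ - Real.sin θ) ≤ W1 r θ := by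
  rcases hθ'.eq_or_lt with rfl | hlt
  · simp [W1_pi_div_four]
  have hd : ∀ x ∈ Ico 0 (π / 4), HasDerivAt (fun x => W1 r x / (Real.cos x - Real.sin x))
      ((W2 r x * (Real.cos x - Real.sin x) + W1 r x * (Real.cos x + Real.sin x))
        / (Real.cos x - Real.sin x) ^ 2) x := by
    intro x hx
    have hne := (cos_sub_sin_pos hx.1 hx.2).ne'
    have h := (hasDerivAt_W1 h0.le h1 x).div ((Real.hasDerivAt_cos x).sub
      (Real.hasDerivAt_sin x)) hne
    refine h.congr_deriv ?_
    simp only [Pi.sub_apply]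
    congr 1
    ring
  have hmono : MonotoneOn (fun x => W1 r x / (Real.cos x - Real.sin x)) (Ico 0 (π / 4)) := by
    apply monotoneOn_of_deriv_nonneg (convex_Ico _ _)
    · exact fun x hx => (hd x hx).continuousAt.continuousWithinAt
    · intro x hx
      rw [interior_Ico] at hx
      exact (hd x ⟨hx.1.le, hx.2⟩).differentiableAt.differentiableWithinAt
    · intro x hx
      rw [interior_Ico] at hx
      rw [(hd x ⟨hx.1.le, hx.2⟩).deriv]
      have := K_pos h0 h1 hx.1.le hx.2
      positivity
  have h := hmono ⟨le_refl _, by linarith⟩ ⟨hθ, hlt⟩ hθ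
  simp only [Real.cos_zero, Real.sin_zero, sub_zero, div_one] at h
  rwa [le_div_iff₀ (cos_sub_sin_pos hθ hlt)] at h

lemma tendsto_W1_one (θ : ℝ) : Tendsto (fun r => W1 r θ) (𝓝[<] 1) (𝓝 (W1 1 θ)) := by
  have h := W1_continuousOn θ 1 ⟨zero_le_one, le_refl _⟩
  refine h.mono_left ?_
  rw [← nhdsWithin_Ioo_eq_nhdsLT (zero_lt_one (α := ℝ))]
  exact nhdsWithin_mono _ Ioo_subset_Icc_self

lemma W1_one_ge {θ : ℝ} (hθ : 0 ≤ θ) (hθ' : θ ≤ π / 4) :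
    Real.cos θ - Real.sin θ ≤ W1 1 θ := by
  have h := (tendsto_W1_one 0).mul_const (Real.cos θ - Real.sin θ)
  rw [W1_one_zero, one_mul] at h
  refine le_of_tendsto_of_tendsto h (tendsto_W1_one θ) ?_
  filter_upwards [Ioo_mem_nhdsLT (zero_lt_one (α := ℝ))] with r hr
  exact W1_ge hr.1 hr.2 hθ hθ'

/-- Comparing `θ`-derivatives at `π/4` in `W1_ge` bounds `∂W/∂r` from below on the diagonal
ray. -/
lemma Wr_ge {r : ℝ} (h0 : 0 < r) (h1 : r < 1) : √2 * W1 r 0 ≤ r * Wr r (π / 4) := by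
  rw [r_mul_Wr]
  set D : ℝ → ℝ := fun θ => W1 r θ - W1 r 0 * (Real.cos θ - Real.sin θ) with hD
  have hd : HasDerivAt D (W2 r (π / 4) + √2 * W1 r 0) (π / 4) := by
    have h := (hasDerivAt_W1 h0.le h1 (π / 4)).sub (((Real.hasDerivAt_cos (π / 4)).sub
      (Real.hasDerivAt_sin (π / 4))).const_mul (W1 r 0))
    refine h.congr_deriv ?_
    rw [Real.cos_pi_div_four, Real.sin_pi_div_four]
    ring
  have h4 : D (π / 4) = 0 := by simp [hD, W1_pi_div_four]
  have hs := (hasDerivAt_iff_tendsto_slope.mp hd).mono_left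
    (nhdsWithin_mono (π / 4) (fun x (hx : x < π / 4) => ne_of_lt hx) :
      𝓝[<] (π / 4) ≤ 𝓝[≠] (π / 4))
  have hle : W2 r (π / 4) + √2 * W1 r 0 ≤ 0 := by
    refine le_of_tendsto hs ?_
    filter_upwards [Ioo_mem_nhdsLT (show (0 : ℝ) < π / 4 by linarith [Real.pi_pos])] with x hx
    rw [slope_def_field, h4]
    have := W1_ge h0 h1 hx.1.le hx.2.le
    apply div_nonpos_of_nonneg_of_nonpos
    · simp only [hD]; linarith
    · linarith [hx.2]
  linarith

/-! ### The inner maximum as a function of the angle -/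

/-- The function under the minimax. -/
noncomputable def fF (x y r θ : ℝ) : ℝ := r * (x * Real.cos θ + y * Real.sin θ) - W r θ

/-- The inner maximum over `r ∈ [0,1]`. -/
noncomputable def FF (x y θ : ℝ) : ℝ := ⨆ r : Icc (0 : ℝ) 1, fF x y r θ

lemma u_eq (x y : ℝ) : u x y = ⨅ θ : Icc (0 : ℝ) (π / 2), FF x y θ := rfl

lemma fF_continuousOn (x y : ℝ) :
    ContinuousOn (fun q : ℝ × ℝ => fF x y q.1 q.2) (Icc 0 1 ×ˢ univ) := by
  unfold fF
  refine ContinuousOn.sub ?_ W_continuousOn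
  fun_prop

lemma fF_continuousOn_r (x y θ : ℝ) : ContinuousOn (fun r => fF x y r θ) (Icc 0 1) :=
  (fF_continuousOn x y).comp (f := fun r => (r, θ)) (by fun_prop) fun _ hr => ⟨hr, mem_univ _⟩

lemma exists_max (x y θ : ℝ) : ∃ r ∈ Icc (0 : ℝ) 1, fF x y r θ = FF x y θ ∧
    ∀ r' ∈ Icc (0 : ℝ) 1, fF x y r' θ ≤ FF x y θ := by
  obtain ⟨r, hr, hmax⟩ := isCompact_Icc.exists_isMaxOn (nonempty_Icc.mpr zero_le_one)
    (fF_continuousOn_r x y θ)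
  have hb : BddAbove (range fun r : Icc (0 : ℝ) 1 => fF x y r θ) := by
    refine ⟨fF x y r θ, ?_⟩
    rintro _ ⟨r', rfl⟩
    exact hmax r'.2
  have hle : ∀ r' ∈ Icc (0 : ℝ) 1, fF x y r' θ ≤ FF x y θ := fun r' hr' =>
    le_ciSup hb (⟨r', hr'⟩ : Icc (0 : ℝ) 1)
  have : Nonempty (Icc (0 : ℝ) 1) := ⟨⟨r, hr⟩⟩
  exact ⟨r, hr, le_antisymm (hle r hr) (ciSup_le fun r' => hmax r'.2), hle⟩

lemma fF_le (x y θ : ℝ) {r : ℝ} (hr : r ∈ Icc (0 : ℝ) 1) : fF x y r θ ≤ FF x y θ := by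
  obtain ⟨_, _, _, h⟩ := exists_max x y θ
  exact h r hr

lemma FF_continuous (x y : ℝ) : Continuous (FF x y) := by
  have hc : Continuous (fun q : ℝ × Icc (0 : ℝ) 1 => fF x y q.2 q.1) :=
    (fF_continuousOn x y).comp_continuous (f := fun q : ℝ × Icc (0 : ℝ) 1 => ((q.2 : ℝ), q.1))
      (by fun_prop) fun q => ⟨q.2.2, mem_univ _⟩
  have h := IsCompact.continuous_sSup (f := fun (θ : ℝ) (r : Icc (0 : ℝ) 1) => fF x y r θ)
    (isCompact_univ) hc
  convert h using 2 with θ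
  rw [image_univ]
  rfl

lemma FF_symm (s θ : ℝ) : FF s s (π / 2 - θ) = FF s s θ := by
  unfold FF fF
  congr 1
  ext r
  rw [W_symm, Real.cos_pi_div_two_sub, Real.sin_pi_div_two_sub]
  ring

lemma FF_nonneg (x y θ : ℝ) : 0 ≤ FF x y θ := by
  have := fF_le x y θ (left_mem_Icc.mpr zero_le_one)
  simpa [fF, W_zero_left] using this

lemma le_u {x y c : ℝ} (h : ∀ θ ∈ Icc (0 : ℝ) (π / 2), ∃ r ∈ Icc (0 : ℝ) 1, c ≤ fF x y r θ) :
    c ≤ u x y := by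
  rw [u_eq]
  have : Nonempty (Icc (0 : ℝ) (π / 2)) := ⟨⟨0, le_refl _, by positivity⟩⟩
  refine le_ciInf fun θ => ?_
  obtain ⟨r, hr, hc⟩ := h θ θ.2
  exact hc.trans (fF_le x y θ hr)

/-- For a positive slope, the inner maximum is not attained at `r = 0`, as `W = O(r⁴)`. -/
lemma FF_pos {s θ : ℝ} (h : 0 < s * Real.cos θ + s * Real.sin θ) : 0 < FF s s θ := by
  obtain ⟨C, hC, hW⟩ := W_le
  set κ := s * Real.cos θ + s * Real.sin θ with hκ
  have hden : 0 < κ + 1 + C := by linarith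
  set r := κ / (κ + 1 + C) with hr
  have hr0 : 0 < r := by positivity
  have hr1 : r ≤ 1 := by rw [hr, div_le_one hden]; linarith
  have hrκ : r * (κ + 1 + C) = κ := by rw [hr]; field_simp
  refine lt_of_lt_of_le ?_ (fF_le s s θ ⟨hr0.le, hr1⟩)
  have h1 := hW r θ hr0.le hr1
  have h2 : r ^ 4 ≤ r ^ 2 := pow_le_pow_of_le_one hr0.le hr1 (by norm_num)
  have h3 : C * r ^ 4 ≤ C * r ^ 2 := by gcongr
  have h4 : 0 < r * (κ - C * r) := by
    apply mul_pos hr0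
    nlinarith
  simp only [fF, ← hκ]
  nlinarith

/-- First-order condition in `r` at an interior maximum. -/
lemma critical {x y r θ : ℝ} (h0 : 0 < r) (h1 : r < 1) (h : fF x y r θ = FF x y θ) :
    x * Real.cos θ + y * Real.sin θ = Wr r θ := by
  have hloc : IsLocalMax (fun r => fF x y r θ) r := by
    filter_upwards [Icc_mem_nhds h0 h1] with r' hr'
    rw [h]
    exact fF_le x y θ hr'
  have hd : HasDerivAt (fun r => fF x y r θ) (1 * (x * Real.cos θ + y * Real.sin θ) - Wr r θ) r :=
    ((hasDerivAt_id r).mul_const _).sub (hasDerivAt_W_r h0 h1 θ)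
  have := hloc.hasDerivAt_eq_zero hd
  linarith

/-- At an inner maximum with `θ < π/4`, the `θ`-derivative is negative: for `r < 1` the
first-order condition turns it into a negative multiple of the quantity in `K_pos`, and for
`r = 1` the bound `W1_one_ge` applies. -/
lemma dtheta_neg {s r θ : ℝ} (hs : s ∈ Ioo (0 : ℝ) 1) (hr : r ∈ Icc (0 : ℝ) 1)
    (hθ : 0 ≤ θ) (hθ' : θ < π / 4) (h : fF s s r θ = FF s s θ) :
    r * (s * (Real.cos θ - Real.sin θ)) - W1 r θ < 0 := by
  have hsum := cos_add_sin_pos hθ hθ'.le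
  have hdiff := cos_sub_sin_pos hθ hθ'
  have hr0 : 0 < r := by
    rcases hr.1.eq_or_lt with e | e
    · exfalso
      have : 0 < FF s s θ := FF_pos (by rw [← mul_add]; exact mul_pos hs.1 hsum)
      rw [← h, ← e] at this
      simp [fF, W_zero_left] at this
    · exact e
  rcases hr.2.eq_or_lt with e | hr1
  · have := W1_one_ge hθ hθ'.le
    rw [e]
    nlinarith [mul_pos (sub_pos.mpr hs.2) hdiff]
  · have hc := critical hr0 hr1 h
    have hK := K_pos hr0 hr1 hθ hθ'
    have hrW := r_mul_Wr r θ
    have : (r * (s * (Real.cos θ - Real.sin θ)) - W1 r θ) * (Real.cos θ + Real.sin θ) < 0 := by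
      have e : (r * (s * (Real.cos θ - Real.sin θ)) - W1 r θ) * (Real.cos θ + Real.sin θ)
          = r * (s * Real.cos θ + s * Real.sin θ) * (Real.cos θ - Real.sin θ)
            - W1 r θ * (Real.cos θ + Real.sin θ) := by ring
      rw [e, hc, hrW]
      linarith
    by_contra hcon
    exact absurd this (not_lt.mpr (mul_nonneg (not_lt.mp hcon) hsum.le))

lemma FF_left {s θ : ℝ} (hs : s ∈ Ioo (0 : ℝ) 1) (hθ : 0 ≤ θ) (hθ' : θ < π / 4) :
    ∀ᶠ z in 𝓝[<] θ, FF s s θ < FF s s z := by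
  obtain ⟨r, hr, hmax, -⟩ := exists_max s s θ
  have hneg := dtheta_neg hs hr hθ hθ' hmax
  have hd : HasDerivAt (fF s s r) (r * (s * (Real.cos θ - Real.sin θ)) - W1 r θ) θ := by
    have h := ((((Real.hasDerivAt_cos θ).const_mul s).add
      ((Real.hasDerivAt_sin θ).const_mul s)).const_mul r).sub (hasDerivAt_W hr.1 hr.2 θ)
    exact h.congr_deriv (by ring)
  have hslope := (hasDerivAt_iff_tendsto_slope.mp hd).mono_left
    (nhdsWithin_mono θ (fun x (hx : x < θ) => ne_of_lt hx) : 𝓝[<] θ ≤ 𝓝[≠] θ)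
  filter_upwards [hslope.eventually (gt_mem_nhds hneg), self_mem_nhdsWithin] with z hz hzθ
  rw [slope_def_field, div_neg_iff] at hz
  have hz2 : z - θ < 0 := sub_neg.mpr hzθ
  rcases hz with hz | hz
  · rw [← hmax]
    have := fF_le s s z hr
    linarith [hz.1]
  · linarith [hz.2]

lemma FF_strict {s α β : ℝ} (hs : s ∈ Ioo (0 : ℝ) 1) (hα : 0 ≤ α) (hαβ : α < β)
    (hβ : β < π / 4) : FF s s β < FF s s α := by
  have hleft : ∀ p, α < p → p ≤ β → ∃ z ∈ Ioo α p, FF s s p < FF s s z := by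
    intro p h1 h2
    obtain ⟨z, hz1, hz2⟩ := ((FF_left hs (hα.trans h1.le) (h2.trans_lt hβ)).and
      (Ioo_mem_nhdsLT h1)).exists
    exact ⟨z, hz2, hz1⟩
  obtain ⟨p, hp, hmax⟩ := isCompact_Icc.exists_isMaxOn (nonempty_Icc.mpr hαβ.le)
    (FF_continuous s s).continuousOn
  rcases hp.1.eq_or_lt with rfl | hlt
  · obtain ⟨z, hz, hlt⟩ := hleft β hαβ le_rfl
    exact hlt.trans_le (hmax ⟨hz.1.le, hz.2.le⟩)
  · obtain ⟨z, hz, hlt2⟩ := hleft p hlt hp.2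
    exact absurd (hmax ⟨hz.1.le, hz.2.le.trans hp.2⟩) (not_le.mpr hlt2)

/-- On the diagonal, `π/4` is the unique minimizing angle. -/
lemma FF_lt {s θ : ℝ} (hs : s ∈ Ioo (0 : ℝ) 1) (hθ : θ ∈ Icc (0 : ℝ) (π / 2))
    (hne : θ ≠ π / 4) : FF s s (π / 4) < FF s s θ := by
  have key : ∀ θ, 0 ≤ θ → θ < π / 4 → FF s s (π / 4) < FF s s θ := by
    intro θ h0 h1
    obtain ⟨β, hβ1, hβ2⟩ := exists_between h1
    refine lt_of_le_of_lt ?_ (FF_strict hs h0 hβ1 hβ2)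
    refine le_of_tendsto ((FF_continuous s s).continuousAt.tendsto.mono_left
      (nhdsWithin_le_nhds (s := Iio (π / 4)))) ?_
    filter_upwards [Ioo_mem_nhdsLT hβ2] with z hz
    exact (FF_strict hs (h0.trans hβ1.le) hz.1 hz.2).le
  rcases lt_or_gt_of_ne hne with h | h
  · exact key θ hθ.1 h
  · rw [← FF_symm s θ]
    exact key _ (by linarith [hθ.2]) (by linarith)

lemma u_diag {s : ℝ} (hs : s ∈ Ioo (0 : ℝ) 1) : u s s = FF s s (π / 4) := by
  have hmem : π / 4 ∈ Icc (0 : ℝ) (π / 2) := ⟨by positivity, by linarith [Real.pi_pos]⟩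
  apply le_antisymm
  · rw [u_eq]
    refine ciInf_le ⟨0, ?_⟩ (⟨π / 4, hmem⟩ : Icc (0 : ℝ) (π / 2))
    rintro _ ⟨θ, rfl⟩
    exact FF_nonneg _ _ _
  · apply le_u
    intro θ hθ
    obtain ⟨r, hr, hmax, -⟩ := exists_max s s θ
    refine ⟨r, hr, ?_⟩
    rw [hmax]
    by_cases e : θ = π / 4
    · rw [e]
    · exact (FF_lt hs hθ e).le

/-- On the diagonal ray, the inner maximum is attained in the open interval `(0,1)`: near `r = 1`
the slope `∂W/∂r` is close to at least `√2`, hence exceeds `√2 s`. -/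
lemma max_interior {s r : ℝ} (hs : s ∈ Ioo (0 : ℝ) 1) (hr : r ∈ Icc (0 : ℝ) 1)
    (h : fF s s r (π / 4) = FF s s (π / 4)) : r ∈ Ioo (0 : ℝ) 1 := by
  have hsl : s * Real.cos (π / 4) + s * Real.sin (π / 4) = √2 * s := by
    rw [Real.cos_pi_div_four, Real.sin_pi_div_four]; ring
  have h2 : 0 < √2 := by positivity
  constructor
  · rcases hr.1.eq_or_lt with e | e
    · exfalso
      have : 0 < FF s s (π / 4) := FF_pos (by rw [hsl]; exact mul_pos h2 hs.1)
      rw [← h, ← e] at this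
      simp [fF, W_zero_left] at this
    · exact e
  · rcases hr.2.eq_or_lt with e | e
    · exfalso
      subst e
      have hev : ∀ᶠ q in 𝓝[<] (1 : ℝ), s < W1 q 0 :=
        (tendsto_W1_one 0).eventually (lt_mem_nhds (by rw [W1_one_zero]; exact hs.2))
      obtain ⟨l, hl, hsub⟩ := (mem_nhdsLT_iff_exists_Ioo_subset' zero_lt_one).mp
        (hev.and (Ioo_mem_nhdsLT (zero_lt_one (α := ℝ))))
      obtain ⟨b, hb1, hb2⟩ := exists_between (mem_Iio.mp hl)
      have hb0 := (hsub ⟨hb1, hb2⟩).2.1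
      have hanti : StrictAntiOn (fun r => fF s s r (π / 4)) (Icc b 1) := by
        apply strictAntiOn_of_deriv_neg (convex_Icc _ _)
        · exact (fF_continuousOn_r s s (π / 4)).mono (Icc_subset_Icc hb0.le le_rfl)
        · intro q hq
          rw [interior_Icc] at hq
          obtain ⟨hq1, hq0, hq2⟩ := hsub ⟨hb1.trans hq.1, hq.2⟩
          have hd : HasDerivAt (fun r => fF s s r (π / 4))
              (1 * (s * Real.cos (π / 4) + s * Real.sin (π / 4)) - Wr q (π / 4)) q :=
            ((hasDerivAt_id q).mul_const _).sub (hasDerivAt_W_r hq0 hq2 _)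
          rw [hd.deriv, hsl]
          have hW := Wr_ge hq0 hq2
          have hgt : √2 * s < q * Wr q (π / 4) := lt_of_lt_of_le (by gcongr) hW
          have hpos : 0 < Wr q (π / 4) := by
            have : 0 < q * Wr q (π / 4) := lt_trans (mul_pos h2 hs.1) hgt
            exact pos_of_mul_pos_right this hq0.le
          nlinarith
      have := hanti ⟨le_rfl, hb2.le⟩ ⟨hb2.le, le_rfl⟩ hb2
      have h3 := fF_le s s (π / 4) (r := b) ⟨hb0.le, hb2.le⟩
      simp only at this
      linarith
    · exact e

/-! ### Touching from above at a diagonal point -/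

lemma fF_add (x y r θ h k : ℝ) : fF (x + h) (y + k) r θ =
    fF x y r θ + (r * Real.cos θ * h + r * Real.sin θ * k) := by
  unfold fF
  ring

lemma fF_le_u_diag {s r : ℝ} (hs : s ∈ Ioo (0 : ℝ) 1) (hr : r ∈ Icc (0 : ℝ) 1) :
    fF s s r (π / 4) ≤ u s s := by
  rw [u_diag hs]
  exact fF_le s s _ hr

lemma hasDerivAt_diag (s : ℝ) : HasDerivAt (fun s : ℝ => (s, s)) ((1 : ℝ), (1 : ℝ)) s :=
  (hasDerivAt_id s).prodMk (hasDerivAt_id s)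

/-- If `φ` touches from above, the maximizing `r` at `(a,a)` on the ray `π/4` is determined by the
derivative of `φ` along the diagonal. -/
lemma diag_deriv {a r : ℝ} (ha : a ∈ Ioo (0 : ℝ) 1) {φ : ℝ × ℝ → ℝ} {φ' : ℝ × ℝ →L[ℝ] ℝ}
    (hφ : HasFDerivAt φ φ' (a, a)) (htouch : ∀ᶠ z in 𝓝 ((a, a) : ℝ × ℝ), u z.1 z.2 ≤ φ z)
    (heq : φ (a, a) = u a a) (hr : r ∈ Icc (0 : ℝ) 1)
    (h : fF a a r (π / 4) = FF a a (π / 4)) : φ' (1, 1) = √2 * r := by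
  have hdiag : ContinuousAt (fun s : ℝ => (s, s)) a := by fun_prop
  have hmin : IsLocalMin (fun s => φ (s, s) - fF s s r (π / 4)) a := by
    filter_upwards [hdiag.eventually htouch, Ioo_mem_nhds ha.1 ha.2] with s hs hs'
    rw [heq, h, u_diag ha]
    have := fF_le_u_diag hs' hr
    linarith
  have h1 : HasDerivAt (fun s : ℝ => φ (s, s)) (φ' (1, 1)) a :=
    hφ.comp_hasDerivAt (f := fun s : ℝ => (s, s)) a (hasDerivAt_diag a)
  have h2 : HasDerivAt (fun s : ℝ => fF s s r (π / 4)) (√2 * r) a := by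
    have := ((((hasDerivAt_id a).mul_const (Real.cos (π / 4))).add
      ((hasDerivAt_id a).mul_const (Real.sin (π / 4)))).const_mul r).sub_const (W r (π / 4))
    refine this.congr_deriv ?_
    rw [Real.cos_pi_div_four, Real.sin_pi_div_four]
    ring
  have := hmin.hasDerivAt_eq_zero (h1.sub h2)
  linarith

/-- One-sided differentiability of `u` at a diagonal point where the inner maximizer on the ray
`π/4` is unique. Maximizing pairs `(r, θ)` at `(a,a)` whose vector `r (cos θ, sin θ)` is far from
the gradient candidate `(c, c)` have inner maximum larger than `u a a` by a fixed amount. -/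
lemma u_lower {a r₀ : ℝ} (ha : a ∈ Ioo (0 : ℝ) 1) (hr₀ : r₀ ∈ Icc (0 : ℝ) 1)
    (huniq : ∀ r ∈ Icc (0 : ℝ) 1, fF a a r (π / 4) = FF a a (π / 4) → r = r₀)
    {ε : ℝ} (hε : 0 < ε) : ∀ᶠ p in 𝓝 (0 : ℝ × ℝ),
      u a a + r₀ * (√2 / 2) * (p.1 + p.2) - ε * ‖p‖ ≤ u (a + p.1) (a + p.2) := by
  set c := r₀ * (√2 / 2) with hc
  have hs2 : √2 / 2 ≤ 1 := by
    have : √2 ≤ 2 := Real.sqrt_le_iff.mpr ⟨by norm_num, by norm_num⟩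
    linarith
  have hc0 : 0 ≤ c := mul_nonneg hr₀.1 (by positivity)
  have hc1 : c ≤ 1 := by
    have : 0 ≤ √2 / 2 := by positivity
    rw [hc]
    exact mul_le_one₀ hr₀.2 this hs2
  set D : ℝ × ℝ → ℝ := fun q => |q.1 * Real.cos q.2 - c| + |q.1 * Real.sin q.2 - c| with hD
  have hDc : Continuous D := by fun_prop
  set S : Set (ℝ × ℝ) := (Icc 0 1 ×ˢ Icc 0 (π / 2)) ∩ {q | ε ≤ D q} with hS
  have hScomp : IsCompact S :=
    (isCompact_Icc.prod isCompact_Icc).inter_right (isClosed_le continuous_const hDc)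
  -- `G` equals the gap `FF θ - FF (π/4)` at maximizing pairs and is positive on all of `S`.
  set G : ℝ × ℝ → ℝ := fun q =>
    (FF a a q.2 - FF a a (π / 4)) + (FF a a q.2 - fF a a q.1 q.2) with hG
  have hGc : ContinuousOn G S := by
    have h1 : Continuous fun q : ℝ × ℝ => FF a a q.2 := (FF_continuous a a).comp continuous_snd
    have h2 := (fF_continuousOn a a).mono
      (show S ⊆ Icc 0 1 ×ˢ univ from fun q hq => ⟨hq.1.1, mem_univ _⟩)
    exact (h1.sub continuous_const).continuousOn.add (h1.continuousOn.sub h2)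
  have hGpos : ∀ q ∈ S, 0 < G q := by
    rintro ⟨r, θ⟩ ⟨⟨hr, hθ⟩, hq⟩
    have h1 : 0 ≤ FF a a θ - fF a a r θ := sub_nonneg.mpr (fF_le a a θ hr)
    by_cases e : θ = π / 4
    · subst e
      rcases h1.eq_or_lt with h2 | h2
      · exfalso
        have := huniq r hr (by linarith)
        subst this
        have : D (r, π / 4) = 0 := by
          simp [hD, hc, Real.cos_pi_div_four, Real.sin_pi_div_four]
        simp only [mem_ofPred_eq] at hq
        linarith
      · simp only [hG]; linarith
    · have := FF_lt ha hθ e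
      simp only [hG]; linarith
  obtain ⟨η, hη, hGη⟩ := hScomp.exists_forall_le' hGc hGpos
  filter_upwards [Metric.ball_mem_nhds (0 : ℝ × ℝ) (show 0 < η / 4 by positivity)] with p hp
  rw [mem_ball_zero_iff] at hp
  have hp1 : |p.1| ≤ ‖p‖ := norm_fst_le p
  have hp2 : |p.2| ≤ ‖p‖ := norm_snd_le p
  have hmin : ∀ θ ∈ Icc (0 : ℝ) (π / 2), FF a a (π / 4) ≤ FF a a θ := by
    intro θ hθ
    by_cases e : θ = π / 4
    · rw [e]
    · exact (FF_lt ha hθ e).le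
  apply le_u
  intro θ hθ
  obtain ⟨r, hr, hmax, -⟩ := exists_max a a θ
  refine ⟨r, hr, ?_⟩
  rw [fF_add, hmax, u_diag ha]
  set A := r * Real.cos θ with hA
  set B := r * Real.sin θ with hB
  by_cases hq : ε ≤ D (r, θ)
  · have hη' := hGη (r, θ) ⟨⟨hr, hθ⟩, hq⟩
    simp only [hG, hmax] at hη'
    have hA1 : |A| ≤ 1 := by
      rw [hA, abs_mul, abs_of_nonneg hr.1]
      exact mul_le_one₀ hr.2 (abs_nonneg _) (Real.abs_cos_le_one θ)
    have hB1 : |B| ≤ 1 := by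
      rw [hB, abs_mul, abs_of_nonneg hr.1]
      exact mul_le_one₀ hr.2 (abs_nonneg _) (Real.abs_sin_le_one θ)
    have e1 : |A * p.1| ≤ 1 * ‖p‖ := by rw [abs_mul]; gcongr
    have e2 : |B * p.2| ≤ 1 * ‖p‖ := by rw [abs_mul]; gcongr
    have e3 : |c * p.1| ≤ 1 * ‖p‖ := by rw [abs_mul, abs_of_nonneg hc0]; gcongr
    have e4 : |c * p.2| ≤ 1 * ‖p‖ := by rw [abs_mul, abs_of_nonneg hc0]; gcongr
    have e5 : 0 ≤ ε * ‖p‖ := by positivity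
    linarith [(abs_le.mp e1).1, (abs_le.mp e2).1, (abs_le.mp e3).2, (abs_le.mp e4).2]
  · have hq' : |A - c| + |B - c| ≤ ε := (not_le.mp hq).le
    have e1 : |(A - c) * p.1| ≤ |A - c| * ‖p‖ := by rw [abs_mul]; gcongr
    have e2 : |(B - c) * p.2| ≤ |B - c| * ‖p‖ := by rw [abs_mul]; gcongr
    have e3 : (|A - c| + |B - c|) * ‖p‖ ≤ ε * ‖p‖ := by gcongr
    have := hmin θ hθ
    nlinarith [(abs_le.mp e1).1, (abs_le.mp e2).1]

/-- A function squeezed between a differentiable `φ` from above and a first-order lower bound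
with slope `ℓ` is differentiable with derivative `ℓ = φ'`. -/
lemma squeeze_fderiv {v φ : ℝ × ℝ → ℝ} {φ' ℓ : ℝ × ℝ →L[ℝ] ℝ} {x : ℝ × ℝ}
    (hφ : HasFDerivAt φ φ' x) (htouch : ∀ᶠ z in 𝓝 x, v z ≤ φ z) (heq : φ x = v x)
    (hlow : ∀ ε > 0, ∀ᶠ p in 𝓝 (0 : ℝ × ℝ), v x + ℓ p - ε * ‖p‖ ≤ v (x + p)) :
    φ' = ℓ ∧ HasFDerivAt v φ' x := by
  have hφo := hasFDerivAt_iff_isLittleO_nhds_zero.mp hφ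
  have hshift : Tendsto (fun p : ℝ × ℝ => x + p) (𝓝 0) (𝓝 x) := by
    have : ContinuousAt (fun p : ℝ × ℝ => x + p) 0 := by fun_prop
    simpa [ContinuousAt] using this
  have htouch' := hshift.eventually htouch
  have hge : ∀ ε > 0, ∀ w, -(2 * ε * ‖w‖) ≤ φ' w - ℓ w := by
    intro ε hε w
    have hev : ∀ᶠ p in 𝓝 (0 : ℝ × ℝ), -(2 * ε * ‖p‖) ≤ φ' p - ℓ p := by
      filter_upwards [htouch', hlow ε hε, hφo.bound hε] with p h1 h2 h3
      rw [Real.norm_eq_abs] at h3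
      linarith [(abs_le.mp h3).2]
    have hsc : Tendsto (fun t : ℝ => t • w) (𝓝[>] 0) (𝓝 0) := by
      have : ContinuousAt (fun t : ℝ => t • w) 0 := by fun_prop
      have h := this.tendsto
      rw [zero_smul] at h
      exact h.mono_left nhdsWithin_le_nhds
    obtain ⟨t, ht, ht0⟩ := ((hsc.eventually hev).and self_mem_nhdsWithin).exists
    have ht0' : 0 < t := ht0
    rw [map_smul, map_smul, norm_smul, Real.norm_eq_abs, abs_of_pos ht0', smul_eq_mul,
      smul_eq_mul] at ht
    by_contra hcon
    nlinarith [mul_pos ht0' (sub_pos.mpr (not_le.mp hcon))]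
  have hge0 : ∀ w, 0 ≤ φ' w - ℓ w := by
    intro w
    refine le_of_forall_pos_le_add fun δ hδ => ?_
    have h := hge (δ / (2 * (‖w‖ + 1))) (by positivity) w
    have h2 : 2 * (δ / (2 * (‖w‖ + 1))) * ‖w‖ ≤ δ := by
      have : 2 * (δ / (2 * (‖w‖ + 1))) * ‖w‖ = δ * (‖w‖ / (‖w‖ + 1)) := by field_simp
      rw [this]
      refine mul_le_of_le_one_right hδ.le ?_
      rw [div_le_one (by positivity)]
      linarith
    linarith
  have hφℓ : φ' = ℓ := by
    apply ContinuousLinearMap.ext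
    intro w
    have h1 := hge0 w
    have h2 := hge0 (-w)
    rw [map_neg, map_neg] at h2
    linarith
  refine ⟨hφℓ, hasFDerivAt_iff_isLittleO_nhds_zero.mpr ?_⟩
  refine Asymptotics.IsLittleO.of_bound fun ε hε => ?_
  filter_upwards [htouch', hlow ε hε, hφo.bound hε] with p h1 h2 h3
  rw [Real.norm_eq_abs] at h3 ⊢
  rw [← hφℓ] at h2
  rw [abs_le]
  constructor
  · linarith
  · linarith [(abs_le.mp h3).2]

/-- A local minimum at which the derivative has a derivative satisfies the second-order necessary
condition. -/
lemma second_deriv_nonneg {ψ ψ' : ℝ → ℝ} {a d : ℝ} (hmin : IsLocalMin ψ a)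
    (h1 : ∀ᶠ s in 𝓝 a, HasDerivAt ψ (ψ' s) s) (h2 : HasDerivAt ψ' d a) : 0 ≤ d := by
  by_contra hd
  have hder : deriv ψ =ᶠ[𝓝 a] ψ' := h1.mono fun s hs => hs.deriv
  have hdd : deriv (deriv ψ) a = d := (hder.deriv_eq).trans h2.deriv
  have hmax : IsLocalMax ψ a :=
    isLocalMax_of_deriv_deriv_neg (by rw [hdd]; exact not_le.mp hd) hmin.deriv_eq_zero
      h1.self_of_nhds.continuousAt
  have hconst : ψ =ᶠ[𝓝 a] fun _ => ψ a := by
    filter_upwards [hmin, hmax] with s hs hs'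
    exact le_antisymm hs' hs
  have h3 : deriv (deriv ψ) a = 0 := by
    have h4 : deriv ψ =ᶠ[𝓝 a] fun _ => 0 := by
      have := hconst.deriv
      simpa using this
    rw [h4.deriv_eq]
    simp
  rw [hdd] at h3
  exact hd h3.ge

/-- Strict convexity of `φ` along the diagonal: compare `φ(s,s)` with
`fF s s (r₀ + t (s - a)) (π/4)`, whose second derivative at `a` is `2√2 t - t² ∂²W/∂r²`,
positive for small `t > 0`. -/
lemma diag_second {a r₀ : ℝ} (ha : a ∈ Ioo (0 : ℝ) 1) (hr₀ : r₀ ∈ Ioo (0 : ℝ) 1)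
    (hmax : fF a a r₀ (π / 4) = FF a a (π / 4)) {φ : ℝ × ℝ → ℝ} (hφ : ContDiffAt ℝ 2 φ (a, a))
    (htouch : ∀ᶠ z in 𝓝 ((a, a) : ℝ × ℝ), u z.1 z.2 ≤ φ z) (heq : φ (a, a) = u a a)
    {D2 : ℝ × ℝ →L[ℝ] ℝ × ℝ →L[ℝ] ℝ} (hD2 : HasFDerivAt (fderiv ℝ φ) D2 (a, a)) :
    0 < D2 (1, 1) (1, 1) := by
  obtain ⟨d, hd⟩ := exists_hasDerivAt_Wr hr₀.1 hr₀.2 (π / 4)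
  set t := 1 / (|d| + 1) with ht
  have ht0 : 0 < t := by positivity
  have htd : d * t < 1 := by
    rw [ht, mul_one_div, div_lt_one (by positivity)]
    linarith [le_abs_self d]
  have hdiag : ContinuousAt (fun s : ℝ => (s, s)) a := by fun_prop
  set ρ : ℝ → ℝ := fun s => r₀ + t * (s - a) with hρ
  have hρd : ∀ s, HasDerivAt ρ t s := fun s =>
    ((((hasDerivAt_id s).sub_const a).const_mul t).const_add r₀).congr_deriv (mul_one t)
  have hρa : ρ a = r₀ := by simp [hρ]
  have hρev : ∀ᶠ s in 𝓝 a, ρ s ∈ Ioo (0 : ℝ) 1 :=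
    (hρd a).continuousAt.eventually (by rw [hρa]; exact Ioo_mem_nhds hr₀.1 hr₀.2)
  have hφev : ∀ᶠ s in 𝓝 a, DifferentiableAt ℝ φ (s, s) := by
    refine hdiag.eventually ?_
    filter_upwards [hφ.eventually (by simp)] with z hz
    exact hz.differentiableAt (by norm_num)
  set κ := Real.cos (π / 4) + Real.sin (π / 4) with hκ
  have hκ1 : 1 < κ := by
    rw [hκ, Real.cos_pi_div_four, Real.sin_pi_div_four]
    have : 1 < √2 := Real.one_lt_sqrt_two
    linarith
  have hmin : IsLocalMin (fun s => φ (s, s) - fF s s (ρ s) (π / 4)) a := by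
    filter_upwards [hdiag.eventually htouch, Ioo_mem_nhds ha.1 ha.2, hρev] with s hs hs' hs''
    rw [heq, hρa, hmax, u_diag ha]
    have := fF_le_u_diag hs' (Ioo_subset_Icc_self hs'')
    linarith
  have h1 : ∀ᶠ s in 𝓝 a, HasDerivAt (fun s => φ (s, s) - fF s s (ρ s) (π / 4))
      (fderiv ℝ φ (s, s) (1, 1) - (t * (s * κ) + ρ s * κ - Wr (ρ s) (π / 4) * t)) s := by
    filter_upwards [hρev, hφev] with s hs hs'
    have e1 : HasDerivAt (fun s : ℝ => φ (s, s)) (fderiv ℝ φ (s, s) (1, 1)) s :=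
      hs'.hasFDerivAt.comp_hasDerivAt (f := fun s : ℝ => (s, s)) s (hasDerivAt_diag s)
    have e2 : HasDerivAt (fun s => W (ρ s) (π / 4)) (Wr (ρ s) (π / 4) * t) s :=
      (hasDerivAt_W_r hs.1 hs.2 (π / 4)).comp s (hρd s)
    have e3 := ((hρd s).mul (((hasDerivAt_id s).mul_const (Real.cos (π / 4))).add
      ((hasDerivAt_id s).mul_const (Real.sin (π / 4))))).sub e2
    refine (e1.sub e3).congr_deriv ?_
    simp only [Pi.add_apply, id, hκ]
    ring
  have h2 : HasDerivAt (fun s => fderiv ℝ φ (s, s) (1, 1) -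
      (t * (s * κ) + ρ s * κ - Wr (ρ s) (π / 4) * t))
      (D2 (1, 1) (1, 1) - (t * κ + t * κ - d * t * t)) a := by
    have e1 : HasDerivAt (fun s : ℝ => fderiv ℝ φ (s, s) (1, 1)) (D2 (1, 1) (1, 1)) a := by
      have e0 : HasDerivAt (fun s : ℝ => fderiv ℝ φ (s, s)) (D2 (1, 1)) a :=
        hD2.comp_hasDerivAt (f := fun s : ℝ => (s, s)) a (hasDerivAt_diag a)
      exact (e0.clm_apply (hasDerivAt_const a ((1 : ℝ), (1 : ℝ)))).congr_deriv (by simp)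
    have e2 : HasDerivAt (fun s => Wr (ρ s) (π / 4)) (d * t) a :=
      HasDerivAt.comp (h₂ := fun r => Wr r (π / 4)) a (by rw [hρa]; exact hd) (hρd a)
    have e3 := ((((hasDerivAt_id a).mul_const κ).const_mul t).add ((hρd a).mul_const κ)).sub
      (e2.mul_const t)
    refine (e1.sub e3).congr_deriv ?_
    ring
  have h := second_deriv_nonneg hmin h1 h2
  nlinarith [mul_pos ht0 (sub_pos.mpr htd), mul_pos ht0 (sub_pos.mpr hκ1)]

/-- if a `C²` function `φ` touches `u` from above at a diagonal point
`x₀ = (a,a) ∈ Ω₁`, then `∇φ(x₀) = ∇u(x₀)` and `Δ∞φ(x₀) > 0`. -/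
theorem stmt17 (a : ℝ) (ha : a ∈ Ioo (0 : ℝ) 1) (φ : ℝ × ℝ → ℝ)
    (hφ : ContDiffAt ℝ 2 φ ((a : ℝ), a))
    (htouch : ∀ᶠ z in 𝓝 (((a : ℝ), a) : ℝ × ℝ), u z.1 z.2 ≤ φ z)
    (heq : φ ((a : ℝ), a) = u a a) :
    fderiv ℝ φ ((a : ℝ), a) = fderiv ℝ (fun p : ℝ × ℝ => u p.1 p.2) ((a : ℝ), a) ∧
    0 < (fderiv ℝ φ ((a : ℝ), a) (1, 0)) ^ 2
          * fderiv ℝ (fun z => fderiv ℝ φ z (1, 0)) ((a : ℝ), a) (1, 0)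
        + 2 * fderiv ℝ φ ((a : ℝ), a) (1, 0) * fderiv ℝ φ ((a : ℝ), a) (0, 1)
          * fderiv ℝ (fun z => fderiv ℝ φ z (1, 0)) ((a : ℝ), a) (0, 1)
        + (fderiv ℝ φ ((a : ℝ), a) (0, 1)) ^ 2
          * fderiv ℝ (fun z => fderiv ℝ φ z (0, 1)) ((a : ℝ), a) (0, 1) := by
  have hF := (hφ.differentiableAt (by norm_num)).hasFDerivAt
  obtain ⟨r₀, hr₀, hmax, -⟩ := exists_max a a (π / 4)
  have hr₀' := max_interior ha hr₀ hmax
  have h2 : 0 < √2 := by positivity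
  have huniq : ∀ r ∈ Icc (0 : ℝ) 1, fF a a r (π / 4) = FF a a (π / 4) → r = r₀ := by
    intro r hr h
    have e1 := diag_deriv ha hF htouch heq hr h
    have e2 := diag_deriv ha hF htouch heq hr₀ hmax
    exact mul_left_cancel₀ h2.ne' (e1.symm.trans e2)
  set c := r₀ * (√2 / 2) with hc
  have hc0 : 0 < c := mul_pos hr₀'.1 (by positivity)
  obtain ⟨hgrad, hu⟩ := squeeze_fderiv (v := fun p : ℝ × ℝ => u p.1 p.2)
    (ℓ := c • (ContinuousLinearMap.fst ℝ ℝ ℝ + ContinuousLinearMap.snd ℝ ℝ ℝ)) hF htouch heq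
    (fun ε hε => by
      filter_upwards [u_lower ha hr₀ huniq hε] with p hp
      simpa [mul_add] using hp)
  refine ⟨hu.fderiv.symm, ?_⟩
  have hD : DifferentiableAt ℝ (fderiv ℝ φ) (a, a) :=
    (hφ.fderiv_right (m := 1) (by norm_num)).differentiableAt (by norm_num)
  have hpos := diag_second ha hr₀' hmax hφ htouch heq hD.hasFDerivAt
  have hsymm : IsSymmSndFDerivAt ℝ φ (a, a) :=
    hφ.isSymmSndFDerivAt (by simp [minSmoothness_of_isRCLikeNormedField])
  have happ : ∀ v w : ℝ × ℝ, fderiv ℝ (fun z => fderiv ℝ φ z v) (a, a) w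
      = fderiv ℝ (fderiv ℝ φ) (a, a) w v := by
    intro v w
    rw [fderiv_clm_apply hD (differentiableAt_const v)]
    simp
  have hsum : ((1 : ℝ), (1 : ℝ)) = (1, 0) + (0, 1) := by simp
  rw [hsum] at hpos
  simp only [map_add, add_apply] at hpos
  have hs := hsymm (1, 0) (0, 1)
  rw [happ, happ, happ]
  have g1 : fderiv ℝ φ (a, a) (1, 0) = c := by rw [hgrad]; simp
  have g2 : fderiv ℝ φ (a, a) (0, 1) = c := by rw [hgrad]; simp
  rw [g1, g2]
  have := mul_pos (pow_pos hc0 2) hpos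
  rw [hs] at this
  linarith
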